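/- There is a universal constant C > 0 such that the following holds for every positive integer n. Let ξ₁,…,ξ_n be i.i.d. Bernoulli(1/2) random variables and Z₁,…,Z_n be i.i.d. standard Gaussian random variables, all mutually independent, and set S_n = Σ_{i=1}^{n} ξ_i Z_i². Then |𝔼[((2/n) S_n)^{1/2}] − (1 − 5/(8n))| ≤ C/n². -/

import Mathlib

open MeasureTheory ProbabilityTheory
open scoped NNReal ENNReal

noncomputable section

/-- The fair Bernoulli measure on `Bool`. -/
def bern : Measure Bool := (PMF.bernoulli 2⁻¹ (by norm_num)).toMeasure

lemma integrable_pow_of_memLp {Ω : Type*} [MeasurableSpace Ω] {P : Measure Ω} [IsFiniteMeasure P]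
    {X : Ω → ℝ} {p n : ℕ} (hX : MemLp X p P) (hn : n ≤ p) : Integrable (fun ω ↦ X ω ^ n) P := by
  have h : MemLp X n P := hX.mono_exponent (by exact_mod_cast hn)
  refine (integrable_norm_iff (h.aestronglyMeasurable.pow n)).1 ?_
  simpa using h.integrable_norm_pow'

/-- The binomial formula for moments of a sum of two independent random variables. -/
lemma integral_add_pow_of_indepFun {Ω : Type*} [MeasurableSpace Ω] {P : Measure Ω}
    [IsFiniteMeasure P] {X Y : Ω → ℝ} {p n : ℕ} (hXY : IndepFun X Y P)
    (hX : MemLp X p P) (hY : MemLp Y p P) (hn : n ≤ p) :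
    ∫ ω, (X ω + Y ω) ^ n ∂P = ∑ m ∈ Finset.range (n + 1),
      (∫ ω, X ω ^ m ∂P) * (∫ ω, Y ω ^ (n - m) ∂P) * n.choose m := by
  have hind (m k : ℕ) : IndepFun (fun ω ↦ X ω ^ m) (fun ω ↦ Y ω ^ k) P :=
    hXY.comp (measurable_id.pow_const m) (measurable_id.pow_const k)
  simp_rw [add_pow]
  rw [integral_finsetSum]
  · refine Finset.sum_congr rfl fun m _ ↦ ?_
    rw [integral_mul_const, (hind m (n - m)).integral_fun_mul_eq_mul_integral
      (hX.aestronglyMeasurable.pow m) (hY.aestronglyMeasurable.pow (n - m))]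
  · intro m hm
    have hm' : m ≤ n := Nat.lt_succ_iff.1 (Finset.mem_range.1 hm)
    exact ((hind m (n - m)).integrable_mul (integrable_pow_of_memLp hX (hm'.trans hn))
      (integrable_pow_of_memLp hY ((Nat.sub_le n m).trans hn))).mul_const _

/-- The first four moments of a sum of centered i.i.d. random variables. -/
lemma moments_sum_of_iIndepFun {Ω ι : Type*} [MeasurableSpace Ω] {P : Measure Ω}
    [IsProbabilityMeasure P] {W : ι → Ω → ℝ} {m₂ m₃ m₄ : ℝ} (hind : iIndepFun W P)
    (hmeas : ∀ i, Measurable (W i)) (hL : ∀ i, MemLp (W i) 4 P)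
    (h₁ : ∀ i, ∫ ω, W i ω ∂P = 0) (h₂ : ∀ i, ∫ ω, W i ω ^ 2 ∂P = m₂)
    (h₃ : ∀ i, ∫ ω, W i ω ^ 3 ∂P = m₃) (h₄ : ∀ i, ∫ ω, W i ω ^ 4 ∂P = m₄) (s : Finset ι) :
    ∫ ω, (∑ i ∈ s, W i ω) ∂P = 0 ∧ ∫ ω, (∑ i ∈ s, W i ω) ^ 2 ∂P = s.card * m₂ ∧
      ∫ ω, (∑ i ∈ s, W i ω) ^ 3 ∂P = s.card * m₃ ∧
      ∫ ω, (∑ i ∈ s, W i ω) ^ 4 ∂P =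
        s.card * m₄ + 3 * (s.card * (s.card - 1)) * m₂ ^ 2 := by
  classical
  induction s using Finset.induction_on with
  | empty => simp
  | insert a s ha ih =>
    obtain ⟨i₁, i₂, i₃, i₄⟩ := ih
    have hS : MemLp (fun ω ↦ ∑ i ∈ s, W i ω) (4 : ℕ) P := memLp_finsetSum s fun i _ ↦ hL i
    have hI : IndepFun (W a) (fun ω ↦ ∑ i ∈ s, W i ω) P := by
      convert (hind.indepFun_finsetSum_of_notMem hmeas ha).symm using 1
      ext ω
      simp
    have key (n : ℕ) (hn : n ≤ 4) := integral_add_pow_of_indepFun hI (hL a) hS hn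
    simp only [Finset.sum_insert ha, Finset.card_insert_of_notMem ha]
    refine ⟨?_, ?_, ?_, ?_⟩
    · have := key 1 (by norm_num)
      simpa [Finset.sum_range_succ, i₁, h₁] using this
    · rw [key 2 (by norm_num)]
      simp [Finset.sum_range_succ, i₁, i₂, h₁, h₂]
      ring
    · rw [key 3 (by norm_num)]
      simp [Finset.sum_range_succ, i₁, i₂, i₃, h₁, h₂, h₃]
      ring
    · rw [key 4 (by norm_num)]
      simp [Finset.sum_range_succ, i₁, i₂, i₃, i₄, h₁, h₂, h₃, h₄, Nat.choose]
      ring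

/-- The third order Taylor polynomial of `√(1 + t)` approximates it up to `t ^ 4` on its whole
domain. -/
lemma abs_sqrt_one_add_sub_le {t : ℝ} (ht : -1 ≤ t) :
    |√(1 + t) - (1 + t / 2 - t ^ 2 / 8 + t ^ 3 / 16)| ≤ t ^ 4 := by
  obtain ⟨s, hs, hst⟩ : ∃ s : ℝ, 0 ≤ s ∧ s ^ 2 = 1 + t :=
    ⟨√(1 + t), Real.sqrt_nonneg _, Real.sq_sqrt (by linarith)⟩
  obtain rfl : t = s ^ 2 - 1 := by linarith
  have hr : √(1 + (s ^ 2 - 1)) = s := by rw [← hst, Real.sqrt_sq hs]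
  have e : s - (1 + (s ^ 2 - 1) / 2 - (s ^ 2 - 1) ^ 2 / 8 + (s ^ 2 - 1) ^ 3 / 16)
      = -((s - 1) ^ 4 * ((s ^ 2 + 4 * s + 5) / 16)) := by ring
  have f : (s ^ 2 - 1) ^ 4 = (s - 1) ^ 4 * (s + 1) ^ 4 := by ring
  rw [hr, e, f, abs_neg, abs_of_nonneg (by positivity)]
  gcongr
  nlinarith [pow_nonneg hs 3, pow_nonneg hs 4, pow_nonneg hs 2]

/-- Second order expansion of the expected square root of an empirical mean. -/
lemma abs_integral_sqrt_one_add_mean_sub_le {Ω ι : Type*} [MeasurableSpace Ω] [Fintype ι]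
    [Nonempty ι] {P : Measure Ω} [IsProbabilityMeasure P] {W : ι → Ω → ℝ} {m₂ m₃ m₄ : ℝ}
    (hind : iIndepFun W P) (hmeas : ∀ i, Measurable (W i)) (hL : ∀ i, MemLp (W i) 4 P)
    (hW : ∀ i ω, -1 ≤ W i ω) (h₁ : ∀ i, ∫ ω, W i ω ∂P = 0)
    (h₂ : ∀ i, ∫ ω, W i ω ^ 2 ∂P = m₂) (h₃ : ∀ i, ∫ ω, W i ω ^ 3 ∂P = m₃)
    (h₄ : ∀ i, ∫ ω, W i ω ^ 4 ∂P = m₄) :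
    |∫ ω, √(1 + (∑ i, W i ω) / Fintype.card ι) ∂P - (1 - m₂ / (8 * Fintype.card ι))|
      ≤ (|m₃| / 16 + |m₄| + 3 * m₂ ^ 2) / (Fintype.card ι : ℝ) ^ 2 := by
  obtain ⟨i₁, i₂, i₃, i₄⟩ :=
    moments_sum_of_iIndepFun hind hmeas hL h₁ h₂ h₃ h₄ (Finset.univ : Finset ι)
  rw [Finset.card_univ] at i₂ i₃ i₄
  have hN : (1 : ℝ) ≤ Fintype.card ι := by exact_mod_cast Fintype.card_pos
  set N := (Fintype.card ι : ℝ)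
  set T : Ω → ℝ := fun ω ↦ ∑ i, W i ω
  change ∫ ω, T ω ^ 2 ∂P = _ at i₂
  change ∫ ω, T ω ^ 3 ∂P = _ at i₃
  change ∫ ω, T ω ^ 4 ∂P = _ at i₄
  have hT : MemLp T (4 : ℕ) P := memLp_finsetSum _ fun i _ ↦ hL i
  have hp (k : ℕ) (hk : k ≤ 4) : Integrable (fun ω ↦ T ω ^ k) P := integrable_pow_of_memLp hT hk
  have hT₁ : Integrable T P := by simpa using hp 1 (by norm_num)
  have hlow (ω : Ω) : -1 ≤ T ω / N := by
    rw [le_div_iff₀ (by linarith)]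
    have := Finset.sum_le_sum fun i (_ : i ∈ Finset.univ) ↦ hW i ω
    simp only [Finset.sum_const, Finset.card_univ, nsmul_eq_mul] at this
    linarith
  have htaylor (ω : Ω) := abs_sqrt_one_add_sub_le (hlow ω)
  have j₁ : Integrable (fun ω ↦ T ω / N / 2) P := (hT₁.div_const N).div_const 2
  have j₂ : Integrable (fun ω ↦ (T ω / N) ^ 2 / 8) P := by
    simp_rw [div_pow]
    exact ((hp 2 (by norm_num)).div_const _).div_const _
  have j₃ : Integrable (fun ω ↦ (T ω / N) ^ 3 / 16) P := by
    simp_rw [div_pow]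
    exact ((hp 3 (by norm_num)).div_const _).div_const _
  have j₄ : Integrable (fun ω ↦ (T ω / N) ^ 4) P := by
    simp_rw [div_pow]
    exact (hp 4 (by norm_num)).div_const _
  have j₁' : Integrable (fun ω ↦ 1 + T ω / N / 2) P := (integrable_const _).add j₁
  have j₂' : Integrable (fun ω ↦ 1 + T ω / N / 2 - (T ω / N) ^ 2 / 8) P := j₁'.sub j₂
  have j₃' : Integrable (fun ω ↦ 1 + T ω / N / 2 - (T ω / N) ^ 2 / 8 + (T ω / N) ^ 3 / 16) P :=
    j₂'.add j₃
  have hTm : Measurable T := Finset.measurable_fun_sum _ fun i _ ↦ hmeas i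
  have jd : Integrable (fun ω ↦ √(1 + T ω / N)
      - (1 + T ω / N / 2 - (T ω / N) ^ 2 / 8 + (T ω / N) ^ 3 / 16)) P :=
    j₄.mono' (by fun_prop) (Filter.Eventually.of_forall htaylor)
  have hsqrt : Integrable (fun ω ↦ √(1 + T ω / N)) P := by
    convert! jd.add j₃' using 1
    ext ω
    simp
  have hpoly : ∫ ω, (1 + T ω / N / 2 - (T ω / N) ^ 2 / 8 + (T ω / N) ^ 3 / 16) ∂P
      = 1 - m₂ / (8 * N) + m₃ / (16 * N ^ 2) := by
    rw [integral_add j₂' j₃, integral_sub j₁' j₂, integral_add (integrable_const _) j₁]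
    simp only [div_pow, integral_div, integral_const, i₁, i₂, i₃, probReal_univ]
    field_simp
    simp only [smul_eq_mul]
    ring
  have hquart : ∫ ω, (T ω / N) ^ 4 ∂P ≤ (|m₄| + 3 * m₂ ^ 2) / N ^ 2 := by
    simp only [div_pow, integral_div, i₄]
    rw [div_le_div_iff₀ (by positivity) (by positivity)]
    have hle : N * m₄ + 3 * (N * (N - 1)) * m₂ ^ 2 ≤ (|m₄| + 3 * m₂ ^ 2) * N ^ 2 := by
      have hm₄ : N * m₄ ≤ N ^ 2 * |m₄| := by
        have hN₂ : N ≤ N ^ 2 := by nlinarith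
        calc N * m₄ ≤ N * |m₄| := by gcongr; exact le_abs_self m₄
          _ ≤ N ^ 2 * |m₄| := by gcongr
      nlinarith [mul_nonneg (by linarith : (0 : ℝ) ≤ N) (sq_nonneg m₂)]
    calc _ ≤ ((|m₄| + 3 * m₂ ^ 2) * N ^ 2) * N ^ 2 := by gcongr
      _ = _ := by ring
  have hdiff := (norm_integral_le_of_norm_le (f := fun ω ↦ √(1 + T ω / N)
    - (1 + T ω / N / 2 - (T ω / N) ^ 2 / 8 + (T ω / N) ^ 3 / 16)) j₄
    (Filter.Eventually.of_forall htaylor)).trans hquart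
  rw [integral_sub hsqrt j₃', hpoly, Real.norm_eq_abs] at hdiff
  change |∫ ω, √(1 + T ω / N) ∂P - (1 - m₂ / (8 * N))| ≤ _
  calc _ = |(∫ ω, √(1 + T ω / N) ∂P - (1 - m₂ / (8 * N) + m₃ / (16 * N ^ 2)))
        + m₃ / (16 * N ^ 2)| := by
          congr 1
          ring
    _ ≤ (|m₄| + 3 * m₂ ^ 2) / N ^ 2 + |m₃ / (16 * N ^ 2)| :=
      (abs_add_le _ _).trans (by gcongr)
    _ = _ := by
      rw [abs_div, abs_of_pos (by positivity : (0 : ℝ) < 16 * N ^ 2)]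
      field_simp
      ring

lemma integral_sq_gaussianReal_zero_one : ∫ x, x ^ 2 ∂gaussianReal 0 1 = 1 := by
  have h := variance_fun_id_gaussianReal (μ := 0) (v := 1)
  rw [variance_eq_integral (by fun_prop)] at h
  simpa using h

lemma integral_pow_four_gaussianReal_zero_one : ∫ x, x ^ 4 ∂gaussianReal 0 1 = 3 := by
  rw [integral_gaussianReal_eq_integral_smul one_ne_zero]
  have hG : Real.Gamma (5 / 2) = 3 / 4 * √Real.pi := by
    rw [show (5 / 2 : ℝ) = 1 / 2 + 1 + 1 by norm_num, Real.Gamma_add_one (by norm_num),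
      Real.Gamma_add_one (by norm_num), Real.Gamma_one_half_eq]
    ring
  have hI := integral_rpow_mul_exp_neg_mul_rpow (p := 2) (q := 4) (b := 1 / 2)
    (by norm_num) (by norm_num) (by norm_num)
  have hb : ((1 / 2 : ℝ)) ^ (-((4 : ℝ) + 1) / 2) = 4 * √2 := by
    rw [one_div, Real.inv_rpow (by norm_num), ← Real.rpow_neg (by norm_num),
      show -(-((4 : ℝ) + 1) / 2) = 2 + 1 / 2 by norm_num, Real.rpow_add (by norm_num),
      ← Real.sqrt_eq_rpow]
    norm_num
  rw [hb, show ((4 : ℝ) + 1) / 2 = 5 / 2 by norm_num, hG] at hI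
  have hA := integral_comp_abs (f := fun x : ℝ ↦ x ^ (4 : ℝ) * Real.exp (-(1 / 2) * x ^ (2 : ℝ)))
  rw [hI] at hA
  have hfun (x : ℝ) : gaussianPDFReal 0 1 x • x ^ 4
      = (√(2 * Real.pi))⁻¹ * (|x| ^ (4 : ℝ) * Real.exp (-(1 / 2) * |x| ^ (2 : ℝ))) := by
    have e₄ : |x| ^ (4 : ℝ) = x ^ 4 := by
      rw [show (4 : ℝ) = ((4 : ℕ) : ℝ) by norm_num, Real.rpow_natCast, Even.pow_abs (by decide)]
    have e₂ : |x| ^ (2 : ℝ) = x ^ 2 := by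
      rw [Real.rpow_two, sq_abs]
    rw [e₄, e₂, gaussianPDFReal]
    simp only [NNReal.coe_one, sub_zero, mul_one, smul_eq_mul]
    ring_nf
  simp_rw [hfun]
  rw [integral_const_mul, hA, Real.sqrt_mul (by norm_num)]
  field_simp

instance : IsProbabilityMeasure bern := PMF.toMeasure.isProbabilityMeasure _

lemma integral_indicator_bern : ∫ b : Bool, (if b then (1 : ℝ) else 0) ∂bern = 1 / 2 := by
  rw [bern, PMF.integral_eq_sum]
  simp [PMF.bernoulli]

/-- The centered variable `2 ξ Z² - 1` on the space of pairs `(ξ, Z)`. -/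
def centeredSq (p : Bool × ℝ) : ℝ := 2 * ((if p.1 then 1 else 0) * p.2 ^ 2) - 1

lemma measurable_centeredSq : Measurable centeredSq := by
  have h : Measurable fun b : Bool ↦ if b then (1 : ℝ) else 0 := measurable_from_top
  unfold centeredSq
  exact (((h.comp measurable_fst).mul (measurable_snd.pow_const 2)).const_mul 2).sub_const 1

lemma neg_one_le_centeredSq (p : Bool × ℝ) : -1 ≤ centeredSq p := by
  unfold centeredSq
  split_ifs <;> nlinarith [sq_nonneg p.2]

lemma memLp_centeredSq : MemLp centeredSq 4 (bern.prod (gaussianReal 0 1)) := by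
  have h₈ : MemLp (fun p : Bool × ℝ ↦ p.2) 8 (bern.prod (gaussianReal 0 1)) :=
    (memLp_id_gaussianReal' 8 (by norm_num)).comp_snd bern
  have : ENNReal.HolderTriple 8 8 4 := ⟨by
    rw [← ENNReal.toReal_eq_toReal_iff' (by simp) (by simp), ENNReal.toReal_add (by simp) (by simp)]
    norm_num⟩
  have hsq : MemLp (fun p : Bool × ℝ ↦ 2 * p.2 ^ 2 + 1) 4 (bern.prod (gaussianReal 0 1)) := by
    simp_rw [sq]
    exact ((h₈.mul h₈).const_mul 2).add (memLp_const 1)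
  refine hsq.of_le measurable_centeredSq.aestronglyMeasurable
    (Filter.Eventually.of_forall fun p ↦ ?_)
  rw [Real.norm_eq_abs, Real.norm_eq_abs, abs_of_nonneg (by positivity : 0 ≤ 2 * p.2 ^ 2 + 1),
    abs_le]
  unfold centeredSq
  constructor <;> split_ifs <;> nlinarith [sq_nonneg p.2]

lemma integral_indicator_mul_bern_prod (f : ℝ → ℝ) :
    ∫ p : Bool × ℝ, (if p.1 then 1 else 0) * f p.2 ∂bern.prod (gaussianReal 0 1)
      = 1 / 2 * ∫ x, f x ∂gaussianReal 0 1 := by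
  rw [integral_prod_mul (fun b : Bool ↦ if b then (1 : ℝ) else 0) f, integral_indicator_bern]

lemma integrable_indicator_mul_pow (k : ℕ) :
    Integrable (fun p : Bool × ℝ ↦ (if p.1 then (1 : ℝ) else 0) * p.2 ^ k)
      (bern.prod (gaussianReal 0 1)) :=
  Integrable.mul_prod (f := fun b : Bool ↦ if b then (1 : ℝ) else 0) .of_finite
    (integrable_pow_of_memLp (memLp_id_gaussianReal' k (by simp)) le_rfl)

lemma integral_centeredSq : ∫ p, centeredSq p ∂bern.prod (gaussianReal 0 1) = 0 := by
  unfold centeredSq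
  rw [integral_sub ((integrable_indicator_mul_pow 2).const_mul 2) (integrable_const _),
    integral_const_mul, integral_indicator_mul_bern_prod (fun x ↦ x ^ 2),
    integral_sq_gaussianReal_zero_one]
  simp

lemma integral_centeredSq_sq : ∫ p, centeredSq p ^ 2 ∂bern.prod (gaussianReal 0 1) = 5 := by
  have e (p : Bool × ℝ) : centeredSq p ^ 2 = 4 * ((if p.1 then 1 else 0) * p.2 ^ 4)
      - 4 * ((if p.1 then 1 else 0) * p.2 ^ 2) + 1 := by
    unfold centeredSq
    split_ifs <;> ring
  have i₄ := (integrable_indicator_mul_pow 4).const_mul 4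
  have i₂ := (integrable_indicator_mul_pow 2).const_mul 4
  simp_rw [e]
  have i₄₂ : Integrable (fun p : Bool × ℝ ↦ 4 * ((if p.1 then 1 else 0) * p.2 ^ 4)
      - 4 * ((if p.1 then 1 else 0) * p.2 ^ 2)) (bern.prod (gaussianReal 0 1)) := i₄.sub i₂
  rw [integral_add i₄₂ (integrable_const _), integral_sub i₄ i₂, integral_const_mul,
    integral_const_mul, integral_indicator_mul_bern_prod (fun x ↦ x ^ 2),
    integral_indicator_mul_bern_prod (fun x ↦ x ^ 4),
    integral_sq_gaussianReal_zero_one, integral_pow_four_gaussianReal_zero_one]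
  norm_num

/-- There is a universal constant `C > 0` such that for all `n ≥ 1`, with
`S_n = ∑_{i=1}^{n} ξ_i Z_i²` (for independent `ξ_i ~ Bernoulli(1/2)` and `Z_i` standard
Gaussian), `|𝔼[((2/n) S_n)^{1/2}] − (1 − 5/(8n))| ≤ C/n²`. -/
theorem half_chi_sqrt_mean_expansion : ∃ C : ℝ, 0 < C ∧ ∀ n : ℕ, 1 ≤ n →
    |(∫ ω : (Fin n → Bool) × (Fin n → ℝ),
          Real.sqrt ((2 / (n : ℝ)) * ∑ i, (if ω.1 i then (ω.2 i) ^ 2 else 0))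
        ∂((Measure.pi fun _ : Fin n => bern).prod
            (Measure.pi fun _ : Fin n => gaussianReal 0 1)))
        - (1 - 5 / (8 * (n : ℝ)))| ≤ C / (n : ℝ) ^ 2 := by
  set ν := bern.prod (gaussianReal 0 1)
  refine ⟨|∫ p, centeredSq p ^ 3 ∂ν| / 16 + |∫ p, centeredSq p ^ 4 ∂ν| + 3 * 5 ^ 2,
    by positivity, fun n hn ↦ ?_⟩
  have : Nonempty (Fin n) := ⟨⟨0, hn⟩⟩
  have hn₀ : (n : ℝ) ≠ 0 := by positivity
  have heval (i : Fin n) := measurePreserving_eval (fun _ : Fin n ↦ ν) i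
  have hmom (k : ℕ) (i : Fin n) :
      ∫ ω : Fin n → Bool × ℝ, centeredSq (ω i) ^ k ∂Measure.pi (fun _ ↦ ν)
        = ∫ p, centeredSq p ^ k ∂ν := by
    conv_rhs => rw [← (heval i).map_eq]
    rw [integral_map (heval i).aemeasurable
      (measurable_centeredSq.pow_const k).aestronglyMeasurable]
  have key := abs_integral_sqrt_one_add_mean_sub_le
    (iIndepFun_pi (μ := fun _ : Fin n ↦ ν) (X := fun _ ↦ centeredSq)
      fun _ ↦ measurable_centeredSq.aemeasurable)
    (fun i ↦ measurable_centeredSq.comp (measurable_pi_apply i))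
    (fun i ↦ memLp_centeredSq.comp_measurePreserving (heval i))
    (fun i ω ↦ neg_one_le_centeredSq (ω i))
    (fun i ↦ by simpa [integral_centeredSq, ν] using hmom 1 i)
    (fun i ↦ (hmom 2 i).trans integral_centeredSq_sq) (hmom 3) (hmom 4)
  rw [Fintype.card_fin] at key
  convert! key using 4
  rw [← (measurePreserving_arrowProdEquivProdArrow Bool ℝ (Fin n) (fun _ ↦ bern)
    (fun _ ↦ gaussianReal 0 1)).integral_comp']
  refine integral_congr_ae (Filter.Eventually.of_forall fun ω ↦ ?_)
  have hsum : ∑ i, centeredSq (ω i)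
      = 2 * ∑ i, (if (ω i).1 then (ω i).2 ^ 2 else 0) - n := by
    simp [centeredSq, Finset.sum_sub_distrib, Finset.mul_sum]
  change √(2 / (n : ℝ) * ∑ i, (if (ω i).1 then (ω i).2 ^ 2 else 0)) = _
  simp only [hsum]
  congr 1
  field_simp
  ring
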